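/- arXiv:2108.12776 — 6 statements merged into one kernel-verified Lean document; each statement's English description precedes it below -/
import Mathlib

section
/- Let ε > 1 and b ∈ ℝ. Then the polynomial P(λ) = λ⁴ + (1−ε)λ³ + (2 + b² − ε)λ² + (1−ε)λ + 1 has a complex root z with Re z ≥ (ε−1)/4 > 0. -/
/-!
Minus the cubic coefficient of a monic quartic is the sum of its four roots, so the real parts of
the roots average `(ε - 1) / 4`, and some root has real part at least this average.
-/

open Polynomial

section Averaging

variable {M : Type*} [AddCommMonoid M] [LinearOrder M] [IsOrderedAddMonoid M]

lemma exists_mem_sum_map_le_card_nsmul {ι : Type*} {s : Multiset ι} (hs : s ≠ 0) (f : ι → M) :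
    ∃ i ∈ s, (s.map f).sum ≤ s.card • f i := by
  obtain ⟨i, hi, hmax⟩ := Multiset.exists_max_image f hs
  refine ⟨i, hi, ?_⟩
  simpa using Multiset.sum_le_card_nsmul (s.map f) (f i) (by simpa using hmax)

lemma exists_isRoot_map_neg_nextCoeff_le_natDegree_nsmul {R : Type*} [CommRing R] [IsDomain R]
    {p : R[X]} (hsplits : p.Splits) (hmonic : p.Monic) (hdeg : p.natDegree ≠ 0) (φ : R →+ M) :
    ∃ z, p.IsRoot z ∧ φ (-p.nextCoeff) ≤ p.natDegree • φ z := by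
  have hcard : p.natDegree = p.roots.card := hsplits.natDegree_eq_card_roots
  have hroots : p.roots ≠ 0 := by rwa [← Multiset.card_pos, ← hcard, Nat.pos_iff_ne_zero]
  obtain ⟨z, hz, hle⟩ := exists_mem_sum_map_le_card_nsmul hroots φ
  refine ⟨z, isRoot_of_mem_roots hz, ?_⟩
  rwa [hsplits.nextCoeff_eq_neg_sum_roots_of_monic hmonic, neg_neg, map_multiset_sum, hcard]

end Averaging

lemma exists_isRoot_neg_re_nextCoeff_div_natDegree_le_re {p : ℂ[X]} (hmonic : p.Monic)
    (hdeg : p.natDegree ≠ 0) : ∃ z, p.IsRoot z ∧ -p.nextCoeff.re / p.natDegree ≤ z.re := by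
  obtain ⟨z, hz, hle⟩ := exists_isRoot_map_neg_nextCoeff_le_natDegree_nsmul
    (IsAlgClosed.splits p) hmonic hdeg Complex.reAddGroupHom
  refine ⟨z, hz, ?_⟩
  rw [div_le_iff₀' (by positivity)]
  simpa using hle

theorem exists_root_re_ge_of_eps_gt_one_general (a b c d : ℂ) :
    ∃ z : ℂ, z ^ 4 + a * z ^ 3 + b * z ^ 2 + c * z + d = 0 ∧ -a.re / 4 ≤ z.re := by
  let p : ℂ[X] := X ^ 4 + C a * X ^ 3 + C b * X ^ 2 + C c * X + C d
  have hdeg : p.natDegree = 4 := by unfold p; compute_degree!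
  have hmonic : p.Monic := by unfold p; monicity!
  have hnext : p.nextCoeff = a := by
    rw [nextCoeff_of_natDegree_pos (by lia), hdeg]
    simp [p]
  obtain ⟨z, hz, hre⟩ := exists_isRoot_neg_re_nextCoeff_div_natDegree_le_re hmonic (by lia)
  exact ⟨z, by simpa [p] using hz, by simpa [hdeg, hnext] using hre⟩

/-- For ε > 1, the characteristic polynomial has a root with real part ≥ (ε−1)/4 > 0. -/
theorem exists_root_re_ge_of_eps_gt_one (ε b : ℝ) (hε : 1 < ε) :
    ∃ z : ℂ, z ^ 4 + (1 - ε) * z ^ 3 + (2 + b ^ 2 - ε) * z ^ 2 + (1 - ε) * z + 1 = 0 ∧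
      (ε - 1) / 4 ≤ z.re ∧ 0 < (ε - 1) / 4 := by
  obtain ⟨z, hz, hre⟩ :=
    exists_root_re_ge_of_eps_gt_one_general (1 - ε) (2 + b ^ 2 - ε) (1 - ε) 1
  exact ⟨z, hz, by simpa using hre, by linarith⟩
end

section
/- Let ε = 1 and 0 < b < 1. Then the complex number z = (√(1−b²) + i√(3+b²))/2 is a root of the polynomial P(λ) = λ⁴ + (1 + b²)λ² + 1, and Re z > 0. -/
/-!
Every complex number `w` satisfies the real quadratic `w ^ 2 - 2 * Re w * w + |w| ^ 2 = 0`. For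
`w = z ^ 2` this is the quartic: `|z| ^ 2 = ((1 - b ^ 2) + (3 + b ^ 2)) / 4 = 1`, and
`-2 * Re (z ^ 2) = ((3 + b ^ 2) - (1 - b ^ 2)) / 2 = 1 + b ^ 2`.
-/

theorem sq_sub_two_mul_re_mul_add_normSq_eq_zero (w : ℂ) :
    w ^ 2 - 2 * w.re * w + Complex.normSq w = 0 := by
  rw [Complex.normSq_eq_conj_mul_self, ← Complex.ofReal_ofNat, ← Complex.ofReal_mul,
    ← Complex.add_conj]
  ring

theorem pow_four_add_mul_sq_add_sq_eq_zero (z : ℂ) :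
    z ^ 4 + 2 * (z.im ^ 2 - z.re ^ 2) * z ^ 2 + (z.re ^ 2 + z.im ^ 2) ^ 2 = 0 := by
  have re_sq : (z ^ 2).re = z.re ^ 2 - z.im ^ 2 := by
    rw [sq z, Complex.mul_re]
    ring
  have normSq_sq : Complex.normSq (z ^ 2) = (z.re ^ 2 + z.im ^ 2) ^ 2 := by
    rw [map_pow, Complex.normSq_apply]
    ring
  have quadratic := sq_sub_two_mul_re_mul_add_normSq_eq_zero (z ^ 2)
  rw [re_sq, normSq_sq] at quadratic
  push_cast at quadratic
  linear_combination quadratic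

theorem quartic_eq_zero_of_eq_half_sqrt_add_I_mul_sqrt {p q : ℝ} (hp : 0 ≤ p) (hq : 0 ≤ q) {z : ℂ}
    (hz : z = (√p + Complex.I * √q) / 2) :
    z ^ 4 + (q - p) / 2 * z ^ 2 + ((p + q) / 4) ^ 2 = 0 := by
  have re_eq : z.re = √p / 2 := by simp [hz]
  have re_sq : (z.re : ℂ) ^ 2 = p / 4 := by
    norm_cast
    rw [re_eq, div_pow, Real.sq_sqrt hp]
    norm_num
  have im_eq : z.im = √q / 2 := by simp [hz]
  have im_sq : (z.im : ℂ) ^ 2 = q / 4 := by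
    norm_cast
    rw [im_eq, div_pow, Real.sq_sqrt hq]
    norm_num
  have quartic := pow_four_add_mul_sq_add_sq_eq_zero z
  rw [re_sq, im_sq] at quartic
  linear_combination quartic

theorem root_pos_re_eps_one_b_lt_one_general (b : ℝ) (hb : |b| < 1)
    (z : ℂ) (hz : z = (√(1 - b ^ 2) + Complex.I * √(3 + b ^ 2)) / 2) :
    z ^ 4 + (1 + b ^ 2) * z ^ 2 + 1 = 0 ∧ 0 < z.re := by
  have hp : 0 < 1 - b ^ 2 := sub_pos.mpr ((sq_lt_one_iff_abs_lt_one b).mpr hb)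
  have hq : 0 ≤ 3 + b ^ 2 := by positivity
  constructor
  · have quartic := quartic_eq_zero_of_eq_half_sqrt_add_I_mul_sqrt hp.le hq hz
    push_cast at quartic
    linear_combination quartic
  · have re_eq : z.re = √(1 - b ^ 2) / 2 := by simp [hz]
    rw [re_eq]
    exact half_pos (Real.sqrt_pos.mpr hp)

/-- For ε = 1 and 0 < b < 1, the number (√(1−b²) + i√(3+b²))/2 is a root of
λ⁴ + (1+b²)λ² + 1, and it has positive real part. -/
theorem root_pos_re_eps_one_b_lt_one (b : ℝ) (hb0 : 0 < b) (hb1 : b < 1)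
    (z : ℂ) (hz : z = (Real.sqrt (1 - b ^ 2) + Complex.I * Real.sqrt (3 + b ^ 2)) / 2) :
    z ^ 4 + (1 + b ^ 2) * z ^ 2 + 1 = 0 ∧ 0 < z.re := by
  exact root_pos_re_eps_one_b_lt_one_general b (abs_lt.mpr ⟨by linarith, hb1⟩) z hz
end

section
/- Let u₀, x₀, v₀, y₀ ∈ ℝ and define u(t) = ½[(2u₀ − t u₀ + t v₀) cos t + (u₀ − v₀ + 2x₀ − t x₀ + t y₀) sin t] and v(t) = ½[(−t u₀ + 2v₀ + t v₀) cos t + (u₀ − v₀ − t x₀ + 2y₀ + t y₀) sin t]. Then u and v satisfy the system ü(t) + u(t) + u̇(t) = v̇(t) and v̈(t) + v(t) − v̇(t) = −u̇(t) for all t ∈ ℝ, together with the initial conditions u(0) = u₀, u̇(0) = x₀, v(0) = v₀, v̇(0) = y₀. -/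
/-!
In resonance the difference `d = v - u` of the two unknowns decouples: subtracting the equations
gives `d̈ + d = 0`, and each of `u`, `v` is a unit-frequency oscillator driven by `ḋ`, at its own
frequency. The secular term `(t / 2) d` is a response to this forcing, so `u = p + (t / 2) d` and
`v = q + (t / 2) d` with `p`, `q` free oscillations. Then `d = q - p`, which closes the loop.
-/

section FreeOscillation

variable {𝕜 E : Type*} [NontriviallyNormedField 𝕜] [NormedAddCommGroup E] [NormedSpace 𝕜 E]
  {κ : 𝕜} {x x' y y' : 𝕜 → E}

/-- The function `x` is a motion of the free oscillator `ẍ + κ x = 0`. The velocity `x'` is an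
explicit argument, so that the second-order equation becomes a pair of first-order ones. -/
structure IsFreeOscillation (κ : 𝕜) (x x' : 𝕜 → E) : Prop where
  hasDerivAt_position (t : 𝕜) : HasDerivAt x (x' t) t
  hasDerivAt_velocity (t : 𝕜) : HasDerivAt x' (-(κ • x t)) t

namespace IsFreeOscillation

theorem sub (hx : IsFreeOscillation κ x x') (hy : IsFreeOscillation κ y y') :
    IsFreeOscillation κ (x - y) (x' - y') where
  hasDerivAt_position t := (hx.hasDerivAt_position t).sub (hy.hasDerivAt_position t)
  hasDerivAt_velocity t := by
    refine ((hx.hasDerivAt_velocity t).sub (hy.hasDerivAt_velocity t)).congr_deriv ?_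
    simp only [Pi.sub_apply]
    module

theorem const_smul (hx : IsFreeOscillation κ x x') (c : 𝕜) :
    IsFreeOscillation κ (c • x) (c • x') where
  hasDerivAt_position t := (hx.hasDerivAt_position t).const_smul c
  hasDerivAt_velocity t := by
    refine ((hx.hasDerivAt_velocity t).const_smul c).congr_deriv ?_
    simp only [Pi.smul_apply]
    module

end IsFreeOscillation

end FreeOscillation

section SecularMotion

variable {𝕜 E : Type*} [NontriviallyNormedField 𝕜] [NormedAddCommGroup E] [NormedSpace 𝕜 E]
  {κ : 𝕜} {p p' q q' r r' w w' : 𝕜 → E}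

/-- The motion `p + t w`, whose secular term `t w` is the response of an oscillator to a forcing
at its own frequency. -/
def secularMotion (p w : 𝕜 → E) (t : 𝕜) : E :=
  p t + t • w t

@[simp]
theorem secularMotion_zero (p w : 𝕜 → E) : secularMotion p w 0 = p 0 := by
  simp [secularMotion]

theorem hasDerivAt_secularMotion {dp dw : E} {t : 𝕜} (hp : HasDerivAt p dp t)
    (hw : HasDerivAt w dw t) : HasDerivAt (secularMotion p w) (dp + w t + t • dw) t := by
  refine (hp.add ((hasDerivAt_id t).smul hw)).congr_deriv ?_
  simp only [id]
  module

theorem deriv_secularMotion_zero {dp dw : E} (hp : HasDerivAt p dp 0) (hw : HasDerivAt w dw 0) :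
    deriv (secularMotion p w) 0 = dp + w 0 := by
  simp [(hasDerivAt_secularMotion hp hw).deriv]

theorem deriv_secularMotion_sub {dp dq dw : E} {t : 𝕜} (hp : HasDerivAt p dp t)
    (hq : HasDerivAt q dq t) (hw : HasDerivAt w dw t) :
    deriv (secularMotion q w) t - deriv (secularMotion p w) t = dq - dp := by
  rw [(hasDerivAt_secularMotion hp hw).deriv, (hasDerivAt_secularMotion hq hw).deriv]
  module

namespace IsFreeOscillation

theorem deriv_deriv_secularMotion_add (hp : IsFreeOscillation κ p p')
    (hw : IsFreeOscillation κ w w') (t : 𝕜) :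
    deriv (deriv (secularMotion p w)) t + κ • secularMotion p w t = (2 : 𝕜) • w' t := by
  have velocity_eq : deriv (secularMotion p w) = secularMotion (p' + w) w' := funext fun s ↦
    (hasDerivAt_secularMotion (hp.hasDerivAt_position s) (hw.hasDerivAt_position s)).deriv
  have velocity_add : HasDerivAt (p' + w) (-(κ • p t) + w' t) t :=
    (hp.hasDerivAt_velocity t).add (hw.hasDerivAt_position t)
  rw [velocity_eq, (hasDerivAt_secularMotion velocity_add (hw.hasDerivAt_velocity t)).deriv,
    secularMotion]
  module

theorem deriv_deriv_secularMotion_add_eq_smul_sub {c : 𝕜} (hp : IsFreeOscillation κ p p')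
    (hq : IsFreeOscillation κ q q') (hr : IsFreeOscillation κ r r') (hw : w = c • (q - p))
    (t : 𝕜) :
    deriv (deriv (secularMotion r w)) t + κ • secularMotion r w t =
      (2 * c) • (deriv (secularMotion q w) t - deriv (secularMotion p w) t) := by
  have hw' : IsFreeOscillation κ w (c • (q' - p')) := hw ▸ (hq.sub hp).const_smul c
  rw [hr.deriv_deriv_secularMotion_add hw', deriv_secularMotion_sub (hp.hasDerivAt_position t)
    (hq.hasDerivAt_position t) (hw'.hasDerivAt_position t), mul_smul, Pi.smul_apply, Pi.sub_apply]

end IsFreeOscillation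

end SecularMotion

section Trigonometric

/-- The real oscillation of angular frequency `ω` with cosine amplitude `a` and sine
amplitude `b`. -/
noncomputable def trigOscillation (ω a b t : ℝ) : ℝ :=
  a * Real.cos (ω * t) + b * Real.sin (ω * t)

@[simp]
theorem trigOscillation_zero (ω a b : ℝ) : trigOscillation ω a b 0 = a := by
  simp [trigOscillation]

theorem hasDerivAt_trigOscillation (ω a b t : ℝ) :
    HasDerivAt (trigOscillation ω a b) (trigOscillation ω (ω * b) (-(ω * a)) t) t := by
  have hω : HasDerivAt (fun s ↦ ω * s) ω t := hasDerivAt_const_mul ω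
  refine ((hω.cos.const_mul a).add (hω.sin.const_mul b)).congr_deriv ?_
  rw [trigOscillation]
  ring

theorem isFreeOscillation_trigOscillation (ω a b : ℝ) :
    IsFreeOscillation (ω ^ 2) (trigOscillation ω a b)
      (trigOscillation ω (ω * b) (-(ω * a))) where
  hasDerivAt_position := hasDerivAt_trigOscillation ω a b
  hasDerivAt_velocity t := by
    refine (hasDerivAt_trigOscillation ω (ω * b) (-(ω * a)) t).congr_deriv ?_
    simp only [trigOscillation, smul_eq_mul]
    ring

end Trigonometric

/-- The explicit solution of the system ü + u + u̇ = v̇, v̈ + v − v̇ = −u̇ (the case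
ε = 1, b = 1) with initial datum (u₀, x₀, v₀, y₀). -/
theorem explicit_solution_eps_one_b_one (u₀ x₀ v₀ y₀ : ℝ) (u v : ℝ → ℝ)
    (hu : ∀ t, u t = (1/2) * ((2*u₀ - t*u₀ + t*v₀) * Real.cos t
        + (u₀ - v₀ + 2*x₀ - t*x₀ + t*y₀) * Real.sin t))
    (hv : ∀ t, v t = (1/2) * ((-(t*u₀) + 2*v₀ + t*v₀) * Real.cos t
        + (u₀ - v₀ - t*x₀ + 2*y₀ + t*y₀) * Real.sin t)) :
    (∀ t : ℝ, deriv (deriv u) t + u t + deriv u t = deriv v t) ∧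
    (∀ t : ℝ, deriv (deriv v) t + v t - deriv v t = -(deriv u t)) ∧
    u 0 = u₀ ∧ deriv u 0 = x₀ ∧ v 0 = v₀ ∧ deriv v 0 = y₀ := by
  -- The secular term adds `w 0 = (v₀ - u₀) / 2` to the velocities at time `0`.
  let p := trigOscillation 1 u₀ (x₀ - (v₀ - u₀) / 2)
  let q := trigOscillation 1 v₀ (y₀ - (v₀ - u₀) / 2)
  let w := (1 / 2 : ℝ) • (q - p)
  have hp : IsFreeOscillation _ p _ := isFreeOscillation_trigOscillation ..
  have hq : IsFreeOscillation _ q _ := isFreeOscillation_trigOscillation ..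
  have hw : IsFreeOscillation _ w _ := (hq.sub hp).const_smul (1 / 2)
  have w_zero : w 0 = (v₀ - u₀) / 2 := by simp [w, p, q, div_eq_inv_mul]
  obtain rfl : u = secularMotion p w := funext fun t ↦ by
    simp only [hu, secularMotion, w, p, q, trigOscillation, Pi.smul_apply, Pi.sub_apply,
      smul_eq_mul, one_mul]
    ring
  obtain rfl : v = secularMotion q w := funext fun t ↦ by
    simp only [hv, secularMotion, w, p, q, trigOscillation, Pi.smul_apply, Pi.sub_apply,
      smul_eq_mul, one_mul]
    ring
  refine ⟨fun t ↦ ?_, fun t ↦ ?_, by simp [p], ?_, by simp [q], ?_⟩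
  · linear_combination hp.deriv_deriv_secularMotion_add_eq_smul_sub hq hp rfl t
  · linear_combination hp.deriv_deriv_secularMotion_add_eq_smul_sub hq hq rfl t
  · rw [deriv_secularMotion_zero (hp.hasDerivAt_position 0) (hw.hasDerivAt_position 0),
      w_zero, trigOscillation_zero]
    ring
  · rw [deriv_secularMotion_zero (hq.hasDerivAt_position 0) (hw.hasDerivAt_position 0),
      w_zero, trigOscillation_zero]
    ring
end

section
/- Let 0 ≤ ε < 1 and b > √ε. Then every complex root z of the polynomial P(λ) = λ⁴ + (1−ε)λ³ + (2 + b² − ε)λ² + (1−ε)λ + 1 satisfies Re z < 0. -/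
/-!
The quartic is palindromic, so dividing it by `z ^ 2` leaves a quadratic in `w = z + z⁻¹`. The real
part of `w` is `z.re * (1 + 1 / |z| ^ 2)`, which has the sign of `z.re`, and a real monic quadratic
with positive coefficients is stable.
-/

theorem palindromic_quartic_eq_sq_mul {K : Type*} [Field K] {z : K} (hz : z ≠ 0) (a b : K) :
    z ^ 4 + a * z ^ 3 + b * z ^ 2 + a * z + 1 =
      z ^ 2 * ((z + z⁻¹) ^ 2 + a * (z + z⁻¹) + (b - 2)) := by
  field_simp
  ring

theorem re_add_inv_neg_iff {z : ℂ} : (z + z⁻¹).re < 0 ↔ z.re < 0 := by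
  have hre : (z + z⁻¹).re = z.re * (1 + (Complex.normSq z)⁻¹) := by
    rw [Complex.add_re, Complex.inv_re, div_eq_mul_inv, mul_one_add]
  have hpos : 0 < 1 + (Complex.normSq z)⁻¹ :=
    add_pos_of_pos_of_nonneg one_pos (inv_nonneg.mpr (Complex.normSq_nonneg z))
  rw [hre]
  exact ⟨fun h ↦ neg_of_mul_neg_left h hpos.le, fun h ↦ mul_neg_of_neg_of_pos h hpos⟩

theorem re_neg_of_quadratic_eq_zero {a b : ℝ} (ha : 0 < a) (hb : 0 < b) {w : ℂ}
    (hw : w ^ 2 + a * w + b = 0) : w.re < 0 := by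
  have hre : w.re ^ 2 - w.im ^ 2 + a * w.re + b = 0 := by
    simpa [pow_two] using congrArg Complex.re hw
  have him : w.im * (2 * w.re + a) = 0 := by
    have him_eq : w.re * w.im + w.im * w.re + a * w.im = 0 := by
      simpa [pow_two] using congrArg Complex.im hw
    linarith
  by_contra! hnonneg
  have hreal : w.im = 0 := (mul_eq_zero.mp him).resolve_right (by positivity)
  have hpos : 0 < w.re ^ 2 + a * w.re + b := by positivity
  exact hpos.ne' (by simpa [hreal] using hre)

theorem roots_neg_re_of_b_gt_sqrt_eps_general {a b : ℝ} (ha : 0 < a) (hb : 2 < b) {z : ℂ}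
    (hz : z ^ 4 + a * z ^ 3 + b * z ^ 2 + a * z + 1 = 0) : z.re < 0 := by
  have hz0 : z ≠ 0 := by
    rintro rfl
    simp at hz
  rw [palindromic_quartic_eq_sq_mul hz0] at hz
  have hquad : (z + z⁻¹) ^ 2 + a * (z + z⁻¹) + (b - 2 : ℝ) = 0 := by
    exact_mod_cast (mul_eq_zero.mp hz).resolve_left (pow_ne_zero 2 hz0)
  exact re_add_inv_neg_iff.mp (re_neg_of_quadratic_eq_zero ha (sub_pos.mpr hb) hquad)

/-- For 0 ≤ ε < 1 and b > √ε, every root of the characteristic polynomial has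
negative real part. -/
theorem roots_neg_re_of_b_gt_sqrt_eps (ε b : ℝ)
    (hε0 : 0 ≤ ε) (hε1 : ε < 1) (hb : Real.sqrt ε < b) :
    ∀ z : ℂ, z ^ 4 + (1 - ε) * z ^ 3 + (2 + b ^ 2 - ε) * z ^ 2 + (1 - ε) * z + 1 = 0 →
      z.re < 0 := by
  have hεb : ε < b ^ 2 := Real.lt_sq_of_sqrt_lt hb
  exact fun z hz ↦ roots_neg_re_of_b_gt_sqrt_eps_general
    (a := 1 - ε) (b := 2 + b ^ 2 - ε) (by linarith) (by linarith) (by exact_mod_cast hz)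
end

section
/- Let 0 ≤ ε < 1 and b > √ε with b ≠ (1+ε)/2. Then the polynomial P(λ) = λ⁴ + (1−ε)λ³ + (2 + b² − ε)λ² + (1−ε)λ + 1 has a complex root z with Re z > (ε−1)/4. -/
/-!
In terms of `w = z + z⁻¹`, the reciprocal quartic `z⁴ + a z³ + c z² + a z + 1` becomes the quadratic
`w² + a w + (c - 2)`. In both `z ↦ z + z⁻¹ = w` and this quadratic, the two solutions have a known
sum, so one of them has at least the average real part; this gives a root with `-Re a / 4 ≤ Re z`.
If both solutions of the quadratic have the average real part `-Re a / 2`, they differ in their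
imaginary parts as soon as the discriminant is nonzero, so one of them is not real. For such a `w`
the solutions `z` and `z⁻¹` cannot have the same real part: if `Re z = Re z⁻¹ ≠ 0`, then `|z| = 1`
and `w = z + conj z` would be real.
-/

theorem exists_add_eq_and_mul_eq {K : Type*} [Field K] [IsAlgClosed K] (s p : K) :
    ∃ x y : K, x + y = s ∧ x * y = p := by
  open Polynomial in
  obtain ⟨x, hx⟩ := IsAlgClosed.exists_root (C 1 * X ^ 2 + C (-s) * X + C p)
    (by rw [degree_quadratic one_ne_zero]; decide)
  have hx : x ^ 2 - s * x + p = 0 := by simpa [sub_eq_add_neg] using hx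
  exact ⟨x, s - x, by ring, by linear_combination -hx⟩

theorem exists_add_eq_and_mul_eq_and_re_le (s p : ℂ) :
    ∃ x y : ℂ, x + y = s ∧ x * y = p ∧ x.re ≤ y.re := by
  obtain ⟨x, y, hsum, hprod⟩ := exists_add_eq_and_mul_eq s p
  rcases le_total x.re y.re with hle | hle
  · exact ⟨x, y, hsum, hprod, hle⟩
  · exact ⟨y, x, by rwa [add_comm], by rwa [mul_comm], hle⟩

theorem exists_add_inv_eq_and_inv_re_le (w : ℂ) :
    ∃ z : ℂ, z ≠ 0 ∧ z + z⁻¹ = w ∧ z⁻¹.re ≤ z.re := by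
  obtain ⟨x, z, hsum, hprod, hle⟩ := exists_add_eq_and_mul_eq_and_re_le w 1
  obtain rfl : x = z⁻¹ := eq_inv_of_mul_eq_one_left hprod
  exact ⟨z, right_ne_zero_of_mul_eq_one hprod, by rwa [add_comm], hle⟩

theorem im_add_inv_eq_zero_of_inv_re_eq {z : ℂ} (hz : z.re ≠ 0) (hinv : z⁻¹.re = z.re) :
    (z + z⁻¹).im = 0 := by
  have hnorm : Complex.normSq z = 1 := by
    rwa [Complex.inv_re, div_eq_mul_inv, mul_eq_left₀ hz, inv_eq_one] at hinv
  simp [Complex.inv_im, hnorm]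

theorem exists_add_inv_eq_and_half_re_le (w : ℂ) :
    ∃ z : ℂ, z ≠ 0 ∧ z + z⁻¹ = w ∧ w.re / 2 ≤ z.re := by
  obtain ⟨z, hz, rfl, hle⟩ := exists_add_inv_eq_and_inv_re_le w
  exact ⟨z, hz, rfl, by rw [Complex.add_re]; linarith⟩

theorem exists_add_inv_eq_and_half_re_lt {w : ℂ} (hre : w.re ≠ 0) (him : w.im ≠ 0) :
    ∃ z : ℂ, z ≠ 0 ∧ z + z⁻¹ = w ∧ w.re / 2 < z.re := by
  obtain ⟨z, hz, rfl, hle⟩ := exists_add_inv_eq_and_inv_re_le w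
  have hlt : z⁻¹.re < z.re := by
    refine hle.lt_of_ne fun heq => him (im_add_inv_eq_zero_of_inv_re_eq (fun h0 => hre ?_) heq)
    rw [Complex.add_re, heq, h0, add_zero]
  exact ⟨z, hz, rfl, by rw [Complex.add_re]; linarith⟩

theorem exists_quadratic_root_re_gt_or_im_ne_zero {p q : ℂ} (hdisc : p ^ 2 ≠ 4 * q) :
    ∃ w : ℂ, w ^ 2 + p * w + q = 0 ∧ (-p.re / 2 < w.re ∨ w.re = -p.re / 2 ∧ w.im ≠ 0) := by
  obtain ⟨x, y, hsum, hprod, hle⟩ := exists_add_eq_and_mul_eq_and_re_le (-p) q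
  have hx : x ^ 2 + p * x + q = 0 := by linear_combination x * hsum - hprod
  have hy : y ^ 2 + p * y + q = 0 := by linear_combination y * hsum - hprod
  have hre : x.re + y.re = -p.re := by simpa using congrArg Complex.re hsum
  rcases hle.lt_or_eq with hlt | heq
  · exact ⟨y, hy, .inl (by linarith)⟩
  have hxy : x ≠ y := by
    rintro rfl
    exact hdisc (by linear_combination (p - 2 * x) * hsum + 4 * hprod)
  by_cases hyim : y.im = 0
  · have hxim : x.im ≠ 0 := fun hxim => hxy (Complex.ext heq (hxim.trans hyim.symm))
    exact ⟨x, hx, .inr ⟨by linarith, hxim⟩⟩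
  · exact ⟨y, hy, .inr ⟨by linarith, hyim⟩⟩

theorem reciprocal_quartic_eq_sq_mul {K : Type*} [Field K] (a c : K) {z : K} (hz : z ≠ 0) :
    z ^ 4 + a * z ^ 3 + c * z ^ 2 + a * z + 1 =
      z ^ 2 * ((z + z⁻¹) ^ 2 + a * (z + z⁻¹) + (c - 2)) := by
  field_simp
  ring

theorem exists_reciprocal_quartic_root_re_gt {a c : ℂ} (ha : a.re ≠ 0)
    (hdisc : a ^ 2 ≠ 4 * (c - 2)) :
    ∃ z : ℂ, z ^ 4 + a * z ^ 3 + c * z ^ 2 + a * z + 1 = 0 ∧ -a.re / 4 < z.re := by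
  obtain ⟨w, hw, hwre⟩ := exists_quadratic_root_re_gt_or_im_ne_zero hdisc
  obtain ⟨z, hz, hzw, hzre⟩ : ∃ z : ℂ, z ≠ 0 ∧ z + z⁻¹ = w ∧ -a.re / 4 < z.re := by
    rcases hwre with hlt | ⟨heq, him⟩
    · obtain ⟨z, hz, hzw, hle⟩ := exists_add_inv_eq_and_half_re_le w
      exact ⟨z, hz, hzw, by linarith⟩
    · have hre : w.re ≠ 0 := fun h0 => ha (by linarith)
      obtain ⟨z, hz, hzw, hlt⟩ := exists_add_inv_eq_and_half_re_lt hre him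
      exact ⟨z, hz, hzw, by linarith⟩
  exact ⟨z, by rw [reciprocal_quartic_eq_sq_mul a c hz, hzw, hw, mul_zero], hzre⟩

theorem exists_root_re_gt_optimal_general {ε b : ℂ} (hε : ε.re ≠ 1)
    (hb : b ^ 2 ≠ ((1 + ε) / 2) ^ 2) :
    ∃ z : ℂ, z ^ 4 + (1 - ε) * z ^ 3 + (2 + b ^ 2 - ε) * z ^ 2 + (1 - ε) * z + 1 = 0 ∧
      (ε.re - 1) / 4 < z.re := by
  have ha : (1 - ε).re ≠ 0 := by simpa [sub_eq_zero] using hε.symm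
  have hdisc : (1 - ε) ^ 2 ≠ 4 * (2 + b ^ 2 - ε - 2) := fun h =>
    hb (by linear_combination -h / 4)
  simpa using exists_reciprocal_quartic_root_re_gt ha hdisc

/-- For 0 ≤ ε < 1 and b > √ε with b ≠ (1+ε)/2, the characteristic polynomial has a root
with real part strictly greater than (ε−1)/4. -/
theorem exists_root_re_gt_optimal (ε b : ℝ)
    (hε0 : 0 ≤ ε) (hε1 : ε < 1) (hb : Real.sqrt ε < b) (hbne : b ≠ (1 + ε) / 2) :
    ∃ z : ℂ, z ^ 4 + (1 - ε) * z ^ 3 + (2 + b ^ 2 - ε) * z ^ 2 + (1 - ε) * z + 1 = 0 ∧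
      (ε - 1) / 4 < z.re := by
  have hsq : b ^ 2 ≠ ((1 + ε) / 2) ^ 2 :=
    mt (sq_eq_sq₀ ((Real.sqrt_nonneg ε).trans hb.le) (by positivity)).mp hbne
  exact exists_root_re_gt_optimal_general (ε := ε) (b := b) hε1.ne (mod_cast hsq)
end

section
/- Let 0 ≤ ε < 1 and b = (1+ε)/2. Then the polynomial P(λ) = λ⁴ + (1−ε)λ³ + (2 + b² − ε)λ² + (1−ε)λ + 1 factors as P(λ) = (λ² + ((1−ε)/2)λ + 1)²; equivalently, its roots are μ = (ε − 1 + i√(15 + 2ε − ε²))/4 and its conjugate μ̄, each with algebraic multiplicity 2, and both roots have real part (ε−1)/4. -/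
/-!
With `b² = ((1 + ε) / 2)²` the middle coefficient `2 + b² - ε` equals `2 + ((1 - ε) / 2)²`, which is
what makes the palindromic quartic the square of `X² + ((1 - ε) / 2) X + 1`. The number `μ` lies on
the unit circle with real part `(ε - 1) / 4`, so this quadratic is `(X - μ) (X - μ̄)`. As
`15 + 2ε - ε² = (ε + 3) (5 - ε)`, the two roots are distinct for every `ε` strictly between `-3` and
`5`, and each of them then has multiplicity two in the square.
-/

section

open Polynomial Complex ComplexConjugate

section TwoRoots

variable {R : Type*} [CommRing R] {a c : R}

theorem isRoot_X_sub_C_mul_X_sub_C_pow [NoZeroDivisors R] {z : R} {n : ℕ} (hn : n ≠ 0) :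
    (((X - C a) * (X - C c)) ^ n).IsRoot z ↔ z = a ∨ z = c := by
  simp [IsRoot, hn, sub_eq_zero]

theorem rootMultiplicity_X_sub_C_mul_X_sub_C_pow [IsDomain R] (hac : a ≠ c) (n : ℕ) :
    (((X - C a) * (X - C c)) ^ n).rootMultiplicity a = n := by
  have hne : (X - C a) ^ n * (X - C c) ^ n ≠ 0 :=
    mul_ne_zero (pow_ne_zero _ (X_sub_C_ne_zero a)) (pow_ne_zero _ (X_sub_C_ne_zero c))
  have hc : ((X - C c) ^ n).rootMultiplicity a = 0 :=
    rootMultiplicity_eq_zero (by simp [IsRoot, sub_eq_zero, hac])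
  rw [mul_pow, rootMultiplicity_mul hne, rootMultiplicity_X_sub_C_pow, hc, add_zero]

end TwoRoots

theorem X_sub_C_mul_X_sub_C_conj (z : ℂ) :
    (X - C z) * (X - C (conj z)) = X ^ 2 - C (2 * z.re : ℂ) * X + C (normSq z : ℂ) := by
  have hadd : C z + C (conj z) = C (2 * z.re : ℂ) := by rw [← C_add, add_conj]; norm_cast
  have hmul : C z * C (conj z) = C (normSq z : ℂ) := by rw [← C_mul, mul_conj]
  linear_combination hmul - X * hadd

/-- The characteristic polynomial of the coupled oscillators `ü + u + u̇ = b v̇`,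
`v̈ + v - ε v̇ = -b u̇`, written out in coefficients. -/
noncomputable def oscillatorCharpoly {R : Type*} [CommRing R] (ε b : R) : R[X] :=
  X ^ 4 + C (1 - ε) * X ^ 3 + C (2 + b ^ 2 - ε) * X ^ 2 + C (1 - ε) * X + 1

theorem oscillatorCharpoly_eq_sq {K : Type*} [Field K] [NeZero (2 : K)] {ε b : K}
    (hb : b ^ 2 = ((1 + ε) / 2) ^ 2) :
    oscillatorCharpoly ε b = (X ^ 2 + C ((1 - ε) / 2) * X + 1) ^ 2 := by
  have h_odd : C (1 - ε) = 2 * C ((1 - ε) / 2) := by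
    rw [← C_ofNat, ← C_mul, mul_div_cancel₀ _ two_ne_zero]
  have h_middle : C (2 + b ^ 2 - ε) = 2 + C ((1 - ε) / 2) ^ 2 := by
    rw [← C_ofNat, ← C_pow, ← C_add, hb]
    congr 1
    field_simp
    ring
  rw [oscillatorCharpoly, h_odd, h_middle]
  ring

/-- The root `μ` of `X² + ((1 - ε) / 2) X + 1` with nonnegative imaginary part, for `-3 ≤ ε ≤ 5`;
outside this range `Real.sqrt` takes the junk value `0` and this is not a root. -/
noncomputable def oscillatorRoot (ε : ℝ) : ℂ :=
  (ε - 1 + I * Real.sqrt (15 + 2 * ε - ε ^ 2)) / 4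

theorem oscillatorRoot_re (ε : ℝ) : (oscillatorRoot ε).re = (ε - 1) / 4 := by
  simp [oscillatorRoot]

theorem oscillatorRoot_im (ε : ℝ) :
    (oscillatorRoot ε).im = Real.sqrt (15 + 2 * ε - ε ^ 2) / 4 := by
  simp [oscillatorRoot]

theorem normSq_oscillatorRoot {ε : ℝ} (hε₀ : -3 ≤ ε) (hε₁ : ε ≤ 5) :
    normSq (oscillatorRoot ε) = 1 := by
  have h_sqrt : Real.sqrt (15 + 2 * ε - ε ^ 2) ^ 2 = 15 + 2 * ε - ε ^ 2 :=
    Real.sq_sqrt (by nlinarith)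
  rw [normSq_apply, oscillatorRoot_re, oscillatorRoot_im]
  linear_combination h_sqrt / 16

theorem oscillatorRoot_ne_conj {ε : ℝ} (hε₀ : -3 < ε) (hε₁ : ε < 5) :
    oscillatorRoot ε ≠ conj (oscillatorRoot ε) := by
  have h_im : 0 < (oscillatorRoot ε).im := by
    rw [oscillatorRoot_im]
    exact div_pos (Real.sqrt_pos.mpr (by nlinarith)) four_pos
  exact fun h ↦ h_im.ne' (conj_eq_iff_im.mp h.symm)

theorem quadratic_eq_X_sub_C_oscillatorRoot_mul {ε : ℝ} (hε₀ : -3 ≤ ε) (hε₁ : ε ≤ 5) :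
    X ^ 2 + C ((1 - ε : ℂ) / 2) * X + 1 =
      (X - C (oscillatorRoot ε)) * (X - C (conj (oscillatorRoot ε))) := by
  have h_coeff : (1 - ε : ℂ) / 2 = -(2 * ((ε - 1) / 4 : ℝ)) := by push_cast; ring
  rw [X_sub_C_mul_X_sub_C_conj, normSq_oscillatorRoot hε₀ hε₁, oscillatorRoot_re, h_coeff,
    C_neg, neg_mul, ← sub_eq_add_neg, ofReal_one, C_1]

theorem charpoly_factors_at_optimal_b_general {ε b : ℝ} (hε₀ : -3 < ε) (hε₁ : ε < 5)
    (hb : b ^ 2 = ((1 + ε) / 2) ^ 2) {μ : ℂ} (hμ : μ = oscillatorRoot ε) :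
    oscillatorCharpoly (ε : ℂ) b = (X ^ 2 + C ((1 - ε : ℂ) / 2) * X + 1) ^ 2 ∧
    (∀ z : ℂ, (oscillatorCharpoly (ε : ℂ) b).IsRoot z ↔ z = μ ∨ z = conj μ) ∧
    (oscillatorCharpoly (ε : ℂ) b).rootMultiplicity μ = 2 ∧
    (oscillatorCharpoly (ε : ℂ) b).rootMultiplicity (conj μ) = 2 ∧
    μ.re = (ε - 1) / 4 ∧ (conj μ).re = (ε - 1) / 4 := by
  subst hμ
  have h_sq : oscillatorCharpoly (ε : ℂ) b = (X ^ 2 + C ((1 - ε : ℂ) / 2) * X + 1) ^ 2 :=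
    oscillatorCharpoly_eq_sq (by exact_mod_cast hb)
  have h_roots := quadratic_eq_X_sub_C_oscillatorRoot_mul hε₀.le hε₁.le
  have h_ne := oscillatorRoot_ne_conj hε₀ hε₁
  refine ⟨h_sq, fun z ↦ ?_, ?_, ?_, oscillatorRoot_re ε, oscillatorRoot_re ε⟩
  · rw [h_sq, h_roots, isRoot_X_sub_C_mul_X_sub_C_pow two_ne_zero]
  · rw [h_sq, h_roots, rootMultiplicity_X_sub_C_mul_X_sub_C_pow h_ne]
  · rw [h_sq, h_roots, mul_comm, rootMultiplicity_X_sub_C_mul_X_sub_C_pow h_ne.symm]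

end

open Polynomial Complex in
/-- For 0 ≤ ε < 1 and b = (1+ε)/2, the characteristic polynomial factors as
(λ² + ((1−ε)/2)λ + 1)²; its roots are μ = (ε − 1 + i√(15 + 2ε − ε²))/4 and its conjugate,
each with algebraic multiplicity 2, and both have real part (ε−1)/4. -/
theorem charpoly_factors_at_optimal_b (ε b : ℝ)
    (hε0 : 0 ≤ ε) (hε1 : ε < 1) (hb : b = (1 + ε) / 2)
    (μ : ℂ) (hμ : μ = ((ε : ℂ) - 1 + I * Real.sqrt (15 + 2 * ε - ε ^ 2)) / 4) :
    ((X ^ 4 + C ((1 : ℂ) - ε) * X ^ 3 + C (2 + (b : ℂ) ^ 2 - ε) * X ^ 2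
        + C ((1 : ℂ) - ε) * X + 1 : Polynomial ℂ) =
      (X ^ 2 + C (((1 : ℂ) - ε) / 2) * X + 1) ^ 2) ∧
    (∀ z : ℂ, (X ^ 4 + C ((1 : ℂ) - ε) * X ^ 3 + C (2 + (b : ℂ) ^ 2 - ε) * X ^ 2
        + C ((1 : ℂ) - ε) * X + 1 : Polynomial ℂ).IsRoot z ↔
      z = μ ∨ z = (starRingEnd ℂ) μ) ∧
    (X ^ 4 + C ((1 : ℂ) - ε) * X ^ 3 + C (2 + (b : ℂ) ^ 2 - ε) * X ^ 2
        + C ((1 : ℂ) - ε) * X + 1 : Polynomial ℂ).rootMultiplicity μ = 2 ∧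
    (X ^ 4 + C ((1 : ℂ) - ε) * X ^ 3 + C (2 + (b : ℂ) ^ 2 - ε) * X ^ 2
        + C ((1 : ℂ) - ε) * X + 1 : Polynomial ℂ).rootMultiplicity ((starRingEnd ℂ) μ) = 2 ∧
    μ.re = (ε - 1) / 4 ∧ ((starRingEnd ℂ) μ).re = (ε - 1) / 4 :=
  charpoly_factors_at_optimal_b_general (by linarith) (by linarith) (by rw [hb]) hμ
end
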